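/- Let s ≥ 1 be a real number. There exists a constant C_s > 0 such that for all continuous functions f, g on the circle ℝ/2πℤ with finite H^s norm, the product f·g has finite H^s norm and ‖f·g‖_{H^s} ≤ C_s·( ‖f‖_{H^s}·‖g‖_{L^∞} + ‖f‖_{L^∞}·‖g‖_{H^s} ), where ‖h‖_{L^∞} := sup_x |h(x)|. -/

import Mathlib

/-!
The `H^s` norm is governed by the tails `E_N(h)² = ∑_{|l| > N} |ĥ(l)|²`: with
`w(n) = (1 + n²)^s`, summation by parts gives
`∑ w(|l|) |ĥ(l)|² = w(0) ‖h‖²_{L²} + ∑_N (w(N+1) - w(N)) E_N(h)²`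
(`tsum_weight_eq`).

`E_N(h)` is the `L²` distance of `h` to the trigonometric polynomials of degree at most `N`. For
`h = f g` and `a = ⌊N / 4⌋`, take `P` a de la Vallée-Poussin type mean of `f` (degree at most `3a`,
equal to `f` on frequencies at most `a`, and `‖P‖_∞ ≤ (3/2) ‖f‖_∞`, see `norm_vpMean_le`) and `Q`
the partial sum of order `a` of the Fourier series of `g`. Since `P Q` has degree at most `N`,
`E_N(f g) ≤ ‖f g - P Q‖_{L²} ≤ ‖f - P‖_{L²} ‖g‖_∞ + ‖P‖_∞ ‖g - Q‖_{L²}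
  ≤ E_a(f) ‖g‖_∞ + (3/2) ‖f‖_∞ E_a(g)`
(`tail_coeffSq_mul_le`). Squaring and summing by parts backwards, the loss from `N` to `N / 4`
becomes the factor `w(4n) / w(n) ≤ 16^s` (`weight_abel_bound`).

Sums of squares are taken in `[0, ∞]`, so that no summability has to be tracked until the end.
-/

open MeasureTheory

local instance : Fact (0 < 2 * Real.pi) := ⟨by positivity⟩

/-- The `l`-th term of the (squared) `H^s` norm of a function on the circle `ℝ/2πℤ`,
computed from its Fourier coefficients. -/
noncomputable def hsTerm (s : ℝ) (f : AddCircle (2 * Real.pi) → ℂ) (l : ℤ) : ℝ :=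
  (1 + (l : ℝ) ^ 2) ^ s * ‖fourierCoeff f l‖ ^ 2

/-- A function on the circle has finite `H^s` norm. -/
def HsFinite (s : ℝ) (f : AddCircle (2 * Real.pi) → ℂ) : Prop :=
  Summable (hsTerm s f)

/-- The `H^s` norm of a function on the circle `ℝ/2πℤ`. -/
noncomputable def hsNorm (s : ℝ) (f : AddCircle (2 * Real.pi) → ℂ) : ℝ :=
  Real.sqrt (∑' l : ℤ, hsTerm s f l)

open AddCircle Finset
open scoped ENNReal

/-! ### Trigonometric approximation -/

section Circle
variable {T : ℝ}

/-- The Dirichlet kernel `∑_{|i| ≤ n} e_i`. -/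
noncomputable def dirichletKer (n : ℕ) (x : AddCircle T) : ℂ :=
  ∑ i ∈ Icc (-(n : ℤ)) n, fourier i x

theorem continuous_dirichletKer (n : ℕ) : Continuous (dirichletKer (T := T) n) := by
  unfold dirichletKer; fun_prop

variable [hT : Fact (0 < T)]

theorem integrable_of_continuous {E : Type*} [NormedAddCommGroup E] {f : AddCircle T → E}
    (hf : Continuous f) :
    Integrable f (haarAddCircle (T := T)) :=
  hf.integrable_of_hasCompactSupport (HasCompactSupport.of_compactSpace f)

/-- Parseval's identity for a continuous function, stated without passing to `L²` classes. -/
theorem hasSum_sq_fourierCoeff_of_continuous {f : AddCircle T → ℂ} (hf : Continuous f) :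
    HasSum (fun l => ‖fourierCoeff f l‖ ^ 2) (∫ t, ‖f t‖ ^ 2 ∂(haarAddCircle (T := T))) := by
  have h := hasSum_sq_fourierCoeff (T := T)
    (ContinuousMap.toLp (E := ℂ) 2 haarAddCircle ℂ ⟨f, hf⟩)
  simp only [fourierCoeff_toLp] at h
  convert h using 1
  · rfl
  apply integral_congr_ae
  filter_upwards [ContinuousMap.coeFn_toLp (E := ℂ) (p := 2) (𝕜 := ℂ) haarAddCircle
    (⟨f, hf⟩ : C(AddCircle T, ℂ))] with x hx
  rw [hx]; rfl

theorem fourierCoeff_sub_of_continuous {f g : AddCircle T → ℂ} (hf : Continuous f)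
    (hg : Continuous g) (l : ℤ) :
    fourierCoeff (fun x => f x - g x) l = fourierCoeff f l - fourierCoeff g l := by
  simp only [fourierCoeff, smul_sub]
  exact integral_sub ((integrable_of_continuous hf).fourier_smul _)
    ((integrable_of_continuous hg).fourier_smul _)

theorem fourierCoeff_trigPoly {ι : Type*} (S : Finset ι) (c : ι → ℂ) (φ : ι → ℤ) (l : ℤ) :
    fourierCoeff (fun x : AddCircle T => ∑ k ∈ S, c k * fourier (φ k) x) l
      = ∑ k ∈ S, if φ k = l then c k else 0 := by
  have h : (fun x : AddCircle T => ∑ k ∈ S, c k * fourier (φ k) x)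
      = ∑ k ∈ S, fun x : AddCircle T => c k * fourier (φ k) x := by
    ext x; simp
  rw [h, fourierCoeff.sum _ _ fun k _ => integrable_of_continuous (by fun_prop), Finset.sum_apply]
  refine Finset.sum_congr rfl fun k _ => ?_
  rw [fourierCoeff.const_mul, fourierCoeff_fourier]
  by_cases hk : φ k = l
  · simp [hk]
  · simp [hk, Ne.symm hk]

theorem integral_sq_dirichletKer (n : ℕ) :
    ∫ t, ‖dirichletKer n t‖ ^ 2 ∂(haarAddCircle (T := T)) = 2 * n + 1 := by
  have h := (hasSum_sq_fourierCoeff_of_continuous (continuous_dirichletKer (T := T) n))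
  have hc : ∀ l : ℤ, ‖fourierCoeff (dirichletKer (T := T) n) l‖ ^ 2
      = if l ∈ Icc (-(n : ℤ)) n then 1 else 0 := by
    intro l
    have := fourierCoeff_trigPoly (T := T) (Icc (-(n : ℤ)) n) (fun _ => 1) id l
    simp only [one_mul, id] at this
    change ‖fourierCoeff (fun x => ∑ i ∈ Icc (-(n : ℤ)) n, fourier i x) l‖ ^ 2 = _
    rw [this, Finset.sum_ite_eq' (Icc (-(n : ℤ)) n) l]
    split_ifs <;> simp
  simp only [hc] at h
  have h2 := hasSum_sum_of_ne_finset_zero (L := .unconditional ℤ) (s := Icc (-(n : ℤ)) n)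
    (f := fun l : ℤ => if l ∈ Icc (-(n : ℤ)) n then (1 : ℝ) else 0)
    (by intro b hb; simp only [hb, if_false])
  rw [h.unique h2, Finset.sum_ite_mem, Finset.inter_self]
  simp only [sum_const, Int.card_Icc, nsmul_eq_mul, mul_one]
  have : ((n : ℤ) + 1 - -(n : ℤ)).toNat = 2 * n + 1 := by omega
  rw [this]; push_cast; ring

/-- A de la Vallée-Poussin type mean of `f` of order `a`: the convolution of `f` with
`D_a D_{2a} / (2a + 1)`, where `D_n` is the Dirichlet kernel, written out as a trigonometric
polynomial. It has degree at most `3a` and reproduces the frequencies `|l| ≤ a`. -/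
noncomputable def vpMean (a : ℕ) (f : AddCircle T → ℂ) (x : AddCircle T) : ℂ :=
  ∑ p ∈ Icc (-(a : ℤ)) a ×ˢ Icc (-((2 * a : ℕ) : ℤ)) (2 * a : ℕ),
    ((2 * a + 1 : ℂ)⁻¹ * fourierCoeff f (p.1 + p.2)) * fourier (p.1 + p.2) x

theorem vpMean_eq_integral (a : ℕ) {f : AddCircle T → ℂ} (hf : Continuous f) (x : AddCircle T) :
    vpMean a f x = (2 * a + 1 : ℂ)⁻¹ * ∫ t, dirichletKer a (x - t) * dirichletKer (2 * a) (x - t)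
      * f t ∂(haarAddCircle (T := T)) := by
  have h1 : ∀ t, dirichletKer a (x - t) * dirichletKer (2 * a) (x - t) * f t
      = ∑ p ∈ Icc (-(a : ℤ)) a ×ˢ Icc (-((2 * a : ℕ) : ℤ)) (2 * a : ℕ),
        fourier (p.1 + p.2) x * (fourier (-(p.1 + p.2)) t • f t) := by
    intro t
    unfold dirichletKer
    rw [Finset.sum_mul_sum, ← Finset.sum_product', Finset.sum_mul]
    refine Finset.sum_congr rfl fun p _ => ?_
    rw [← fourier_add, smul_eq_mul, ← mul_assoc]
    congr 1
    simp only [fourier_apply]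
    rw [sub_eq_add_neg, smul_add, toCircle_add, Circle.coe_mul, smul_neg, neg_smul]
  simp_rw [h1]
  rw [integral_finsetSum _ fun p _ => ((integrable_of_continuous hf).fourier_smul _).const_mul _,
    Finset.mul_sum]
  refine Finset.sum_congr rfl fun p _ => ?_
  rw [integral_const_mul, fourierCoeff]
  ring

/-- The means are bounded on `L^∞` uniformly in `a`: by AM-GM the `L¹` norm of the kernel
`D_a D_{2a} / (2a + 1)` is at most `((2a + 1) + (4a + 1)) / (2 (2a + 1)) ≤ 3 / 2`. -/
theorem norm_vpMean_le (a : ℕ) {f : AddCircle T → ℂ} (hf : Continuous f) {A : ℝ}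
    (hA : ∀ x, ‖f x‖ ≤ A) (x : AddCircle T) : ‖vpMean a f x‖ ≤ 3 / 2 * A := by
  have hA0 : 0 ≤ A := (norm_nonneg _).trans (hA 0)
  have hint : ∀ n : ℕ, Integrable (fun t => ‖dirichletKer n (x - t)‖ ^ 2) (haarAddCircle (T := T)) :=
    fun n => integrable_of_continuous (by have := continuous_dirichletKer (T := T) n; fun_prop)
  have hval : ∀ n : ℕ, ∫ t, ‖dirichletKer n (x - t)‖ ^ 2 ∂(haarAddCircle (T := T)) = 2 * n + 1 := by
    intro n
    rw [← integral_sq_dirichletKer (T := T) n]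
    exact integral_sub_left_eq_self (fun t => ‖dirichletKer n t‖ ^ 2) haarAddCircle x
  have hI : ‖∫ t, dirichletKer a (x - t) * dirichletKer (2 * a) (x - t)
      * f t ∂(haarAddCircle (T := T))‖ ≤ ∫ t, A / 2 * (‖dirichletKer a (x - t)‖ ^ 2
        + ‖dirichletKer (2 * a) (x - t)‖ ^ 2) ∂(haarAddCircle (T := T)) := by
    refine norm_integral_le_of_norm_le (((hint a).add (hint (2 * a))).const_mul _)
      (Filter.Eventually.of_forall fun t => ?_)
    rw [norm_mul, norm_mul]
    have h1 := two_mul_le_add_sq ‖dirichletKer a (x - t)‖ ‖dirichletKer (2 * a) (x - t)‖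
    calc _ ≤ ‖dirichletKer a (x - t)‖ * ‖dirichletKer (2 * a) (x - t)‖ * A := by
          gcongr; exact hA t
      _ ≤ _ := by nlinarith
  rw [integral_const_mul, integral_add (hint a) (hint (2 * a)), hval, hval] at hI
  rw [vpMean_eq_integral a hf, norm_mul, norm_inv]
  have hn : ‖(2 * a + 1 : ℂ)‖ = 2 * a + 1 := by
    have : (2 * a + 1 : ℂ) = ((2 * a + 1 : ℕ) : ℂ) := by push_cast; ring
    rw [this, Complex.norm_natCast]; push_cast; ring
  rw [hn, inv_mul_le_iff₀ (by positivity)]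
  refine hI.trans ?_
  push_cast
  nlinarith [(Nat.cast_nonneg a : (0 : ℝ) ≤ a)]

/-- The mean acts as a Fourier multiplier `θ` with values in `[0, 1]`, equal to `1` for
`|l| ≤ a`. -/
theorem fourierCoeff_vpMean (a : ℕ) (f : AddCircle T → ℂ) (l : ℤ) :
    ∃ θ : ℝ, 0 ≤ θ ∧ θ ≤ 1 ∧ (l.natAbs ≤ a → θ = 1) ∧
      fourierCoeff (vpMean a f) l = θ * fourierCoeff f l := by
  -- The multiplier at `l` is the proportion of `i ∈ [-a, a]` with `l - i ∈ [-2a, 2a]`.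
  set S := (Icc (-(a : ℤ)) a).filter (fun i => l - i ∈ Icc (-((2 * a : ℕ) : ℤ)) (2 * a : ℕ))
  have hcard : (Icc (-(a : ℤ)) a).card = 2 * a + 1 := by
    rw [Int.card_Icc]; omega
  have hS : S.card ≤ 2 * a + 1 := hcard ▸ Finset.card_filter_le _ _
  refine ⟨(2 * a + 1 : ℝ)⁻¹ * S.card, by positivity, ?_, ?_, ?_⟩
  · rw [inv_mul_le_iff₀ (by positivity)]
    exact_mod_cast by omega
  · intro hl
    have : S = Icc (-(a : ℤ)) a := by
      refine Finset.filter_true_of_mem fun i hi => ?_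
      rw [Finset.mem_Icc] at hi ⊢
      omega
    rw [this, hcard]
    push_cast
    exact inv_mul_cancel₀ (by positivity)
  · have h := fourierCoeff_trigPoly (T := T)
      (Icc (-(a : ℤ)) a ×ˢ Icc (-((2 * a : ℕ) : ℤ)) (2 * a : ℕ))
      (fun p => (2 * a + 1 : ℂ)⁻¹ * fourierCoeff f (p.1 + p.2)) (fun p => p.1 + p.2) l
    change fourierCoeff (fun x => ∑ p ∈ _, _) l = _
    rw [h, Finset.sum_product]
    have : ∀ i ∈ Icc (-(a : ℤ)) a, (∑ j ∈ Icc (-((2 * a : ℕ) : ℤ)) (2 * a : ℕ),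
        if i + j = l then (2 * a + 1 : ℂ)⁻¹ * fourierCoeff f (i + j) else 0)
        = if l - i ∈ Icc (-((2 * a : ℕ) : ℤ)) (2 * a : ℕ)
          then (2 * a + 1 : ℂ)⁻¹ * fourierCoeff f l else 0 := by
      intro i _
      rw [← Finset.sum_ite_eq' _ (l - i) fun _ => (2 * a + 1 : ℂ)⁻¹ * fourierCoeff f l]
      refine Finset.sum_congr rfl fun j _ => ?_
      by_cases hj : i + j = l
      · rw [if_pos hj, if_pos (by omega), hj]
      · rw [if_neg hj, if_neg (by omega)]
    rw [Finset.sum_congr rfl this, ← Finset.sum_filter, Finset.sum_const, nsmul_eq_mul]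
    change (S.card : ℂ) * _ = _
    push_cast
    ring

/-- The truncated Fourier series `∑_{|k| ≤ a} ĝ(k) e_k`. -/
noncomputable def partialSum (a : ℕ) (g : AddCircle T → ℂ) (x : AddCircle T) : ℂ :=
  ∑ k ∈ Icc (-(a : ℤ)) a, fourierCoeff g k * fourier k x

theorem fourierCoeff_partialSum (a : ℕ) (g : AddCircle T → ℂ) (l : ℤ) :
    fourierCoeff (partialSum a g) l = if l.natAbs ≤ a then fourierCoeff g l else 0 := by
  have h := fourierCoeff_trigPoly (T := T) (Icc (-(a : ℤ)) a) (fourierCoeff g) id l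
  change fourierCoeff (fun x => ∑ p ∈ _, _) l = _
  simp only [id] at h
  rw [h, Finset.sum_ite_eq' _ l]
  refine if_congr ?_ rfl rfl
  rw [Finset.mem_Icc]; omega

/-- The product has degree at most `3a + a = 4a`. -/
theorem fourierCoeff_vpMean_mul_partialSum (a : ℕ) (f g : AddCircle T → ℂ) {l : ℤ}
    (hl : 4 * a < l.natAbs) :
    fourierCoeff (fun x => vpMean a f x * partialSum a g x) l = 0 := by
  have h := fourierCoeff_trigPoly (T := T)
    ((Icc (-(a : ℤ)) a ×ˢ Icc (-((2 * a : ℕ) : ℤ)) (2 * a : ℕ)) ×ˢ Icc (-(a : ℤ)) a)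
    (fun p => (2 * a + 1 : ℂ)⁻¹ * fourierCoeff f (p.1.1 + p.1.2) * fourierCoeff g p.2)
    (fun p => p.1.1 + p.1.2 + p.2) l
  have h2 : (fun x : AddCircle T => vpMean a f x * partialSum a g x) = fun x => ∑ p ∈
      (Icc (-(a : ℤ)) a ×ˢ Icc (-((2 * a : ℕ) : ℤ)) (2 * a : ℕ)) ×ˢ Icc (-(a : ℤ)) a,
      (2 * a + 1 : ℂ)⁻¹ * fourierCoeff f (p.1.1 + p.1.2) * fourierCoeff g p.2
        * fourier (p.1.1 + p.1.2 + p.2) x := by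
    ext x
    rw [vpMean, partialSum, Finset.sum_mul_sum, ← Finset.sum_product']
    refine Finset.sum_congr rfl fun p _ => ?_
    rw [fourier_add (m := p.1.1 + p.1.2)]
    ring
  rw [h2, h]
  refine Finset.sum_eq_zero fun p hp => if_neg ?_
  simp only [Finset.mem_product, Finset.mem_Icc] at hp
  omega

theorem continuous_vpMean (a : ℕ) (f : AddCircle T → ℂ) : Continuous (vpMean a f) := by
  unfold vpMean; fun_prop

theorem continuous_partialSum (a : ℕ) (f : AddCircle T → ℂ) : Continuous (partialSum a f) := by
  unfold partialSum; fun_prop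

end Circle

/-! ### Summation by parts -/

/-- The tail `∑_{|l| > N} u l`. -/
noncomputable def tail (u : ℤ → ℝ≥0∞) (N : ℕ) : ℝ≥0∞ :=
  ∑' l : ℤ, if N < l.natAbs then u l else 0

theorem add_sum_range_tsub {W : ℕ → ℝ≥0∞} (hW : Monotone W) (k : ℕ) :
    W 0 + ∑ N ∈ range k, (W (N + 1) - W N) = W k := by
  induction k with
  | zero => simp
  | succ k ih => rw [sum_range_succ, ← add_assoc, ih, add_tsub_cancel_of_le (hW k.le_succ)]

theorem tsum_mul_tail_div (d : ℕ → ℝ≥0∞) (u : ℤ → ℝ≥0∞) {c : ℕ} (hc : 0 < c) :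
    ∑' N, d N * tail u (N / c) = ∑' l : ℤ, (∑ N ∈ range (l.natAbs * c), d N) * u l := by
  simp only [tail, ← ENNReal.tsum_mul_left]
  rw [ENNReal.tsum_comm]
  refine tsum_congr fun l => ?_
  rw [sum_eq_tsum_indicator, ← ENNReal.tsum_mul_right]
  refine tsum_congr fun N => ?_
  simp only [Set.indicator_apply, coe_range, Set.mem_Iio, Nat.div_lt_iff_lt_mul hc]
  split_ifs <;> simp

/-- Summation by parts: a sum with monotone radial weight is a positive combination of tails. -/
theorem tsum_weight_eq {W : ℕ → ℝ≥0∞} (hW : Monotone W) (u : ℤ → ℝ≥0∞) :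
    ∑' l : ℤ, W l.natAbs * u l
      = W 0 * ∑' l, u l + ∑' N, (W (N + 1) - W N) * tail u N := by
  have h := tsum_mul_tail_div (fun N => W (N + 1) - W N) u one_pos
  simp only [Nat.div_one, mul_one] at h
  rw [h, ← ENNReal.tsum_mul_left, ← ENNReal.tsum_add]
  refine tsum_congr fun l => ?_
  rw [← add_mul, add_sum_range_tsub hW]

/-- Evaluating the tails at `N / c` instead of `N` amounts to replacing the weight `W n` by
`W (c n)`, which costs only the doubling constant `κ`. -/
theorem tsum_mul_tail_div_le {W : ℕ → ℝ≥0∞} (hW : Monotone W) (u : ℤ → ℝ≥0∞) {κ : ℝ≥0∞} {c : ℕ}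
    (hc : 0 < c) (hκ : ∀ n, W (n * c) ≤ κ * W n) :
    ∑' N, (W (N + 1) - W N) * tail u (N / c) ≤ κ * ∑' l : ℤ, W l.natAbs * u l := by
  rw [tsum_mul_tail_div _ _ hc, ← ENNReal.tsum_mul_left]
  refine ENNReal.tsum_le_tsum fun l => ?_
  rw [← mul_assoc]
  gcongr
  refine le_trans ?_ (hκ _)
  rw [← add_sum_range_tsub hW (l.natAbs * c)]
  exact le_add_self

/-- Tail estimates with a loss of a factor `c` in frequency transfer to weighted sums, for every
monotone weight with `W (c n) ≤ κ W n`. -/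
theorem weight_abel_bound {W : ℕ → ℝ≥0∞} (hW : Monotone W) {κ : ℝ≥0∞} {c : ℕ} (hc : 0 < c)
    (hκ : ∀ n, W (n * c) ≤ κ * W n) {u v w : ℤ → ℝ≥0∞} {α β : ℝ≥0∞}
    (h0 : ∑' l, w l ≤ α * ∑' l, u l)
    (ht : ∀ N, tail w N ≤ α * tail u (N / c) + β * tail v (N / c)) :
    ∑' l : ℤ, W l.natAbs * w l ≤ (1 + κ) * (α * (∑' l : ℤ, W l.natAbs * u l)
      + β * ∑' l : ℤ, W l.natAbs * v l) := by
  have h1 : W 0 * ∑' l, w l ≤ α * ∑' l : ℤ, W l.natAbs * u l := by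
    calc W 0 * ∑' l, w l ≤ W 0 * (α * ∑' l, u l) := by gcongr
      _ = α * ∑' l, W 0 * u l := by rw [ENNReal.tsum_mul_left]; ring
      _ ≤ _ := by
        gcongr
        exact hW (Nat.zero_le _)
  have h2 : ∑' N, (W (N + 1) - W N) * tail w N
      ≤ α * (κ * ∑' l : ℤ, W l.natAbs * u l) + β * (κ * ∑' l : ℤ, W l.natAbs * v l) := by
    calc ∑' N, (W (N + 1) - W N) * tail w N
        ≤ ∑' N, (α * ((W (N + 1) - W N) * tail u (N / c))
            + β * ((W (N + 1) - W N) * tail v (N / c))) := by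
          refine ENNReal.tsum_le_tsum fun N => ?_
          calc _ ≤ (W (N + 1) - W N) * (α * tail u (N / c) + β * tail v (N / c)) := by
                gcongr; exact ht N
            _ = _ := by ring
      _ = α * ∑' N, (W (N + 1) - W N) * tail u (N / c)
          + β * ∑' N, (W (N + 1) - W N) * tail v (N / c) := by
          rw [ENNReal.tsum_add, ENNReal.tsum_mul_left, ENNReal.tsum_mul_left]
      _ ≤ _ := by
          gcongr <;> exact tsum_mul_tail_div_le hW _ hc hκ
  rw [tsum_weight_eq hW w]
  calc _ ≤ _ := add_le_add h1 h2
    _ ≤ α * (∑' l : ℤ, W l.natAbs * u l)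
          + (α * (κ * ∑' l : ℤ, W l.natAbs * u l) + β * (κ * ∑' l : ℤ, W l.natAbs * v l))
          + β * ∑' l : ℤ, W l.natAbs * v l := le_self_add
    _ = _ := by ring

/-! ### Tails of a product -/

section Product
variable {T : ℝ} [hT : Fact (0 < T)]

/-- The squared moduli `|f̂(l)|²`, valued in `[0, ∞]`. -/
noncomputable def coeffSq (f : AddCircle T → ℂ) (l : ℤ) : ℝ≥0∞ :=
  ENNReal.ofReal (‖fourierCoeff f l‖ ^ 2)

theorem tsum_coeffSq {f : AddCircle T → ℂ} (hf : Continuous f) :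
    ∑' l, coeffSq f l = ENNReal.ofReal (∫ t, ‖f t‖ ^ 2 ∂(haarAddCircle (T := T))) := by
  have h := hasSum_sq_fourierCoeff_of_continuous hf
  rw [← h.tsum_eq, ENNReal.ofReal_tsum_of_nonneg (fun _ => by positivity) h.summable]
  rfl

theorem tsum_coeffSq_sub_vpMean_le (a : ℕ) {f : AddCircle T → ℂ} (hf : Continuous f) :
    ∑' l, coeffSq (fun x => f x - vpMean a f x) l ≤ tail (coeffSq f) a := by
  refine ENNReal.tsum_le_tsum fun l => ?_
  obtain ⟨θ, h0, h1, hl, h⟩ := fourierCoeff_vpMean a f l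
  rw [coeffSq, fourierCoeff_sub_of_continuous hf (continuous_vpMean a f), h]
  split_ifs with hal
  · refine ENNReal.ofReal_le_ofReal ?_
    have : fourierCoeff f l - θ * fourierCoeff f l = ((1 - θ : ℝ) : ℂ) * fourierCoeff f l := by
      push_cast; ring
    rw [this, norm_mul, Complex.norm_real, Real.norm_of_nonneg (by linarith)]
    gcongr
    exact mul_le_of_le_one_left (norm_nonneg _) (by linarith)
  · simp [hl (not_lt.mp hal)]

theorem tsum_coeffSq_sub_partialSum_le (a : ℕ) {g : AddCircle T → ℂ} (hg : Continuous g) :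
    ∑' l, coeffSq (fun x => g x - partialSum a g x) l ≤ tail (coeffSq g) a := by
  refine ENNReal.tsum_le_tsum fun l => ?_
  rw [coeffSq, fourierCoeff_sub_of_continuous hg (continuous_partialSum a g),
    fourierCoeff_partialSum]
  split_ifs with h1 h2 h2
  · omega
  · simp
  · simp [coeffSq]
  · omega

theorem tsum_coeffSq_mul_le {f g : AddCircle T → ℂ} (hf : Continuous f) (hg : Continuous g)
    {B : ℝ} (hB : ∀ x, ‖g x‖ ≤ B) :
    ∑' l, coeffSq (fun x => f x * g x) l ≤ ENNReal.ofReal (B ^ 2) * ∑' l, coeffSq f l := by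
  rw [tsum_coeffSq (by fun_prop), tsum_coeffSq hf, ← ENNReal.ofReal_mul (by positivity),
    ← integral_const_mul]
  refine ENNReal.ofReal_le_ofReal (integral_mono (integrable_of_continuous (by fun_prop))
    (integrable_of_continuous (by fun_prop)) fun x => ?_)
  dsimp only
  rw [norm_mul, mul_pow, mul_comm]
  gcongr
  exact hB x

/-- The tail estimate for a product. With `P` a mean of `f` and `Q` a partial sum of `g`, the
polynomial `P Q` has degree at most `N`, so the tail of `f g` is at most
`‖f g - P Q‖²_{L²}`, and `f g - P Q = (f - P) g + P (g - Q)`. -/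
theorem tail_coeffSq_mul_le {f g : AddCircle T → ℂ} (hf : Continuous f) (hg : Continuous g)
    {A B : ℝ} (hA : ∀ x, ‖f x‖ ≤ A) (hB : ∀ x, ‖g x‖ ≤ B) {a N : ℕ} (haN : 4 * a ≤ N) :
    tail (coeffSq fun x => f x * g x) N
      ≤ ENNReal.ofReal (2 * B ^ 2) * tail (coeffSq f) a
        + ENNReal.ofReal (9 / 2 * A ^ 2) * tail (coeffSq g) a := by
  have hP := continuous_vpMean a f
  have hQ := continuous_partialSum a g
  set P := vpMean a f
  set Q := partialSum a g
  have h1 : tail (coeffSq fun x => f x * g x) N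
      ≤ ∑' l, coeffSq (fun x => f x * g x - P x * Q x) l := by
    refine ENNReal.tsum_le_tsum fun l => ?_
    split_ifs with hl
    · rw [coeffSq, coeffSq, fourierCoeff_sub_of_continuous (by fun_prop) (by fun_prop),
        fourierCoeff_vpMean_mul_partialSum a f g (by omega), sub_zero]
    · exact zero_le
  have h2 : ∫ t, ‖f t * g t - P t * Q t‖ ^ 2 ∂(haarAddCircle (T := T))
      ≤ 2 * B ^ 2 * ∫ t, ‖f t - P t‖ ^ 2 ∂(haarAddCircle (T := T))
        + 9 / 2 * A ^ 2 * ∫ t, ‖g t - Q t‖ ^ 2 ∂(haarAddCircle (T := T)) := by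
    rw [← integral_const_mul, ← integral_const_mul, ← integral_add
      (integrable_of_continuous (by fun_prop)) (integrable_of_continuous (by fun_prop))]
    refine integral_mono (integrable_of_continuous (by fun_prop))
      (integrable_of_continuous (by fun_prop)) fun x => ?_
    dsimp only
    have e : f x * g x - P x * Q x = (f x - P x) * g x + P x * (g x - Q x) := by ring
    have k1 : ‖f x * g x - P x * Q x‖ ≤ B * ‖f x - P x‖ + 3 / 2 * A * ‖g x - Q x‖ := by
      rw [e]
      refine (norm_add_le _ _).trans ?_
      rw [norm_mul, norm_mul, mul_comm ‖f x - P x‖]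
      gcongr
      · exact hB x
      · exact norm_vpMean_le a hf hA x
    calc _ ≤ (B * ‖f x - P x‖ + 3 / 2 * A * ‖g x - Q x‖) ^ 2 := by gcongr
      _ ≤ 2 * ((B * ‖f x - P x‖) ^ 2 + (3 / 2 * A * ‖g x - Q x‖) ^ 2) := add_sq_le
      _ = _ := by ring
  refine h1.trans ?_
  rw [tsum_coeffSq (by fun_prop)]
  refine (ENNReal.ofReal_le_ofReal h2).trans ?_
  rw [ENNReal.ofReal_add (by positivity) (by positivity), ENNReal.ofReal_mul (by positivity),
    ENNReal.ofReal_mul (p := 9 / 2 * A ^ 2) (by positivity),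
    ← tsum_coeffSq (f := fun t => f t - P t) (by fun_prop),
    ← tsum_coeffSq (f := fun t => g t - Q t) (by fun_prop)]
  gcongr
  · exact tsum_coeffSq_sub_vpMean_le a hf
  · exact tsum_coeffSq_sub_partialSum_le a hg

end Product

/-! ### Sobolev norms -/

/-- The Sobolev weight `(1 + n²)^s`, valued in `[0, ∞]`. -/
noncomputable def sobolevWeight (s : ℝ) (n : ℕ) : ℝ≥0∞ :=
  ENNReal.ofReal ((1 + (n : ℝ) ^ 2) ^ s)

theorem monotone_sobolevWeight {s : ℝ} (hs : 0 ≤ s) : Monotone (sobolevWeight s) := by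
  intro m n hmn
  refine ENNReal.ofReal_le_ofReal (Real.rpow_le_rpow (by positivity) ?_ hs)
  gcongr

theorem sobolevWeight_mul_four_le {s : ℝ} (hs : 0 ≤ s) (n : ℕ) :
    sobolevWeight s (n * 4) ≤ ENNReal.ofReal (16 ^ s) * sobolevWeight s n := by
  rw [sobolevWeight, sobolevWeight, ← ENNReal.ofReal_mul (by positivity),
    ← Real.mul_rpow (by positivity) (by positivity)]
  refine ENNReal.ofReal_le_ofReal (Real.rpow_le_rpow (by positivity) ?_ hs)
  push_cast
  nlinarith

theorem hsTerm_nonneg (s : ℝ) (f : AddCircle (2 * Real.pi) → ℂ) (l : ℤ) : 0 ≤ hsTerm s f l := by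
  unfold hsTerm; positivity

theorem ofReal_hsTerm (s : ℝ) (f : AddCircle (2 * Real.pi) → ℂ) (l : ℤ) :
    ENNReal.ofReal (hsTerm s f l) = sobolevWeight s l.natAbs * coeffSq f l := by
  rw [hsTerm, ENNReal.ofReal_mul (by positivity), sobolevWeight, coeffSq, Nat.cast_natAbs]
  simp

theorem HsFinite.tsum_eq {s : ℝ} {f : AddCircle (2 * Real.pi) → ℂ} (hf : HsFinite s f) :
    ∑' l : ℤ, sobolevWeight s l.natAbs * coeffSq f l = ENNReal.ofReal (hsNorm s f ^ 2) := by
  simp only [← ofReal_hsTerm]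
  rw [hsNorm, Real.sq_sqrt (tsum_nonneg (hsTerm_nonneg s f)),
    ENNReal.ofReal_tsum_of_nonneg (hsTerm_nonneg s f) hf]

/-- An upper bound in `[0, ∞]` yields both finiteness of the `H^s` norm and the bound on it. -/
theorem hsFinite_of_tsum_le {s : ℝ} {f : AddCircle (2 * Real.pi) → ℂ} {R : ℝ} (hR : 0 ≤ R)
    (h : ∑' l : ℤ, sobolevWeight s l.natAbs * coeffSq f l ≤ ENNReal.ofReal (R ^ 2)) :
    HsFinite s f ∧ hsNorm s f ≤ R := by
  have hfin : HsFinite s f := by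
    have h2 : ∑' l, ENNReal.ofReal (hsTerm s f l) ≠ ∞ := by
      simp only [ofReal_hsTerm]
      exact ne_top_of_le_ne_top ENNReal.ofReal_ne_top h
    have h3 := ENNReal.summable_toReal h2
    simp only [ENNReal.toReal_ofReal (hsTerm_nonneg s f _)] at h3
    exact h3
  refine ⟨hfin, ?_⟩
  rw [hfin.tsum_eq, ENNReal.ofReal_le_ofReal_iff (by positivity)] at h
  exact le_of_sq_le_sq h hR

theorem norm_le_iSup_norm {f : AddCircle (2 * Real.pi) → ℂ} (hf : Continuous f)
    (x : AddCircle (2 * Real.pi)) : ‖f x‖ ≤ ⨆ x, ‖f x‖ :=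
  le_ciSup (isCompact_range hf.norm).bddAbove x

/-- The product (Moser-type) lemma for periodic Sobolev spaces: for `s ≥ 1` there is
`C_s > 0` such that for all continuous `f, g` with finite `H^s` norm, `f·g` has finite
`H^s` norm and `‖f g‖_{H^s} ≤ C_s (‖f‖_{H^s} ‖g‖_{L^∞} + ‖f‖_{L^∞} ‖g‖_{H^s})`. -/
theorem periodic_sobolev_product_lemma (s : ℝ) (hs : 1 ≤ s) :
    ∃ C : ℝ, 0 < C ∧
      ∀ f g : AddCircle (2 * Real.pi) → ℂ,
        Continuous f → Continuous g → HsFinite s f → HsFinite s g →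
        HsFinite s (fun x => f x * g x) ∧
          hsNorm s (fun x => f x * g x)
            ≤ C * (hsNorm s f * (⨆ x, ‖g x‖) + (⨆ x, ‖f x‖) * hsNorm s g) := by
  refine ⟨√(5 * (1 + 16 ^ s)), by positivity, fun f g hf hg hfs hgs => ?_⟩
  have hs0 : 0 ≤ s := by linarith
  have hA := norm_le_iSup_norm hf
  have hB := norm_le_iSup_norm hg
  set A := ⨆ x, ‖f x‖
  set B := ⨆ x, ‖g x‖
  have hA0 : 0 ≤ A := (norm_nonneg _).trans (hA 0)
  have hB0 : 0 ≤ B := (norm_nonneg _).trans (hB 0)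
  have hF : 0 ≤ hsNorm s f := Real.sqrt_nonneg _
  have hG : 0 ≤ hsNorm s g := Real.sqrt_nonneg _
  -- Degrees add up to at most `4 ⌊N / 4⌋ ≤ N`, so order `N / 4` approximants serve the tail at `N`.
  have key := weight_abel_bound (monotone_sobolevWeight hs0) four_pos
    (sobolevWeight_mul_four_le hs0) (u := coeffSq f) (v := coeffSq g)
    (w := coeffSq fun x => f x * g x) (α := ENNReal.ofReal (2 * B ^ 2))
    (β := ENNReal.ofReal (9 / 2 * A ^ 2))
    ((tsum_coeffSq_mul_le hf hg hB).trans (by gcongr; nlinarith))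
    (fun N => tail_coeffSq_mul_le hf hg hA hB (Nat.mul_div_le N 4))
  refine hsFinite_of_tsum_le (by positivity) (key.trans ?_)
  rw [hfs.tsum_eq, hgs.tsum_eq, ← ENNReal.ofReal_one, ← ENNReal.ofReal_add (by positivity)
    (by positivity), ← ENNReal.ofReal_mul (by positivity), ← ENNReal.ofReal_mul (by positivity),
    ← ENNReal.ofReal_add (by positivity) (by positivity), ← ENNReal.ofReal_mul (by positivity)]
  refine ENNReal.ofReal_le_ofReal ?_
  rw [mul_pow, Real.sq_sqrt (by positivity), mul_comm (5 : ℝ), mul_assoc (1 + (16 : ℝ) ^ s) 5]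
  have h16 : (0 : ℝ) ≤ 1 + 16 ^ s := by positivity
  refine mul_le_mul_of_nonneg_left ?_ h16
  have h1 : 0 ≤ (hsNorm s f * B) * (A * hsNorm s g) := by positivity
  nlinarith [sq_nonneg (hsNorm s f * B), sq_nonneg (A * hsNorm s g)]
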